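/- arXiv:2105.03603 — 3 statements merged into one kernel-verified Lean document; each statement's English description precedes it below -/
import Mathlib

section
/- Let S be a nonempty finite set and let P be a row-stochastic matrix on S. Suppose there is a probability vector μ on S with μ(j) > 0 for every j ∈ S such that for all i, j ∈ S, P^d(j|i) → μ(j) as d → ∞. Then there exists ε* ∈ (0,1) such that for every integer d ≥ 1 and all i, j ∈ S: if P^d(j|i) > 0 then P^d(j|i) ≥ ε*. (That is, every ergodic transition probability matrix admits a uniform positive lower bound, over all powers d, on its nonzero entries.) -/
/-- Let `P` be a row-stochastic matrix on a nonempty finite set `S` such that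
the entries of the powers `P^d` converge, as `d → ∞`, to a strictly positive probability
vector `μ` (independently of the row). Then there is a uniform `ε* ∈ (0,1)` bounding from
below all nonzero entries of all powers `P^d`, `d ≥ 1`. Here `(P ^ d) i j` is the
`(i,j)`-th entry of the `d`-th matrix power, i.e. `P^d(j|i)`. -/
theorem ergodic_matrix_uniform_lower_bound {S : Type*} [Fintype S] [DecidableEq S] [Nonempty S]
    (P : Matrix S S ℝ)
    (hnonneg : ∀ i j, 0 ≤ P i j) (hrow : ∀ i, ∑ j, P i j = 1)
    (μ : S → ℝ) (hμnonneg : ∀ j, 0 ≤ μ j) (hμsum : ∑ j, μ j = 1)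
    (hμpos : ∀ j, 0 < μ j)
    (hconv : ∀ i j, Filter.Tendsto (fun d : ℕ => (P ^ d) i j) Filter.atTop (nhds (μ j))) :
    ∃ εstar : ℝ, εstar ∈ Set.Ioo (0 : ℝ) 1 ∧
      ∀ d : ℕ, 1 ≤ d → ∀ i j, 0 < (P ^ d) i j → εstar ≤ (P ^ d) i j := by
  have key : ∀ a : ℝ, 0 < a → ∀ᶠ ε in nhdsWithin (0 : ℝ) (Set.Ioi 0), ε ≤ a := by
    intro a ha
    exact (eventually_le_nhds ha).filter_mono nhdsWithin_le_nhds
  have h1 : ∀ᶠ ε in nhdsWithin (0 : ℝ) (Set.Ioi 0), ∀ i j, ∀ d : ℕ,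
      0 < (P ^ d) i j → ε ≤ (P ^ d) i j := by
    rw [Filter.eventually_all]
    intro i
    rw [Filter.eventually_all]
    intro j
    have hhalf : μ j / 2 < μ j := by linarith [hμpos j]
    obtain ⟨N, hN⟩ := Filter.eventually_atTop.1 ((hconv i j).eventually (eventually_gt_nhds hhalf))
    have h2 : ∀ᶠ ε in nhdsWithin (0 : ℝ) (Set.Ioi 0), ∀ d ∈ Set.Iio N,
        0 < (P ^ d) i j → ε ≤ (P ^ d) i j := by
      rw [Filter.eventually_all_finite (Set.finite_Iio N)]
      intro d _
      by_cases h : 0 < (P ^ d) i j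
      · filter_upwards [key _ h] with ε hε _ using hε
      · exact Filter.Eventually.of_forall fun ε h' => absurd h' h
    filter_upwards [h2, key _ (half_pos (hμpos j))] with ε hε hε' d hd
    rcases lt_or_ge d N with h | h
    · exact hε d h hd
    · exact hε'.trans (hN d h).le
  obtain ⟨ε, h, hε, hpos⟩ := (h1.and ((key (1 / 2) (by norm_num)).and
    self_mem_nhdsWithin)).exists
  exact ⟨ε, ⟨hpos, by linarith⟩, fun d _ i j hd => h i j d hd⟩
end

section
/- Fix a nonempty finite set S, an integer K ≥ 3, and η ∈ (0,1]. Let C = (h, P₁, P₂) and C′ = (h′, P₁′, P₂′) be two arms configurations (so P₁ ≠ P₂ and P₁′ ≠ P₂′) with C ≠ C′ as triples (they differ in at least one component). Then there exists a state (d̄, ī) — a vector d̄ of positive-integer delays and a vector ī ∈ S^K of last observed states — such that for every arm b ∈ {1,…,K}, the transition probability functions (d̄′, ī′) ↦ Q_C(d̄′, ī′ | d̄, ī, b) and (d̄′, ī′) ↦ Q_{C′}(d̄′, ī′ | d̄, ī, b) are not identical. -/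
open Matrix

/-- A row-stochastic matrix on a finite set `S`: nonnegative entries, rows summing to 1. -/
def RowStochastic {S : Type*} [Fintype S] (P : Matrix S S ℝ) : Prop :=
  (∀ i j, 0 ≤ P i j) ∧ ∀ i, ∑ j, P i j = 1

/-- The transition probability matrix of arm `a` under the arms configuration
`C = (h, P₁, P₂)`: `P₁` if `a = h`, and `P₂` otherwise. -/
def armMatrix {S : Type*} {K : ℕ} (h : Fin K) (P₁ P₂ : Matrix S S ℝ) :
    Fin K → Matrix S S ℝ :=
  fun a => if a = h then P₁ else P₂

open scoped Classical in
/-- The transition probability `Q_C(d̄′, ī′ | d̄, ī, b)` of the countable-state controlled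
Markov process of delays and last observed states:
`∑ a (η/K + (1−η)·1{a=b}) · (P_C^a)^{d_a}(i′_a | i_a) ·
  1{d′_a = 1 ∧ ∀ ã ≠ a, d′_ã = d_ã + 1} · 1{∀ ã ≠ a, i′_ã = i_ã}`,
where `PC a` is the transition matrix of arm `a` and `((PC a) ^ d) i j = (P_C^a)^d(j|i)`. -/
noncomputable def Qtrans {S : Type*} [Fintype S] [DecidableEq S] {K : ℕ}
    (η : ℝ) (PC : Fin K → Matrix S S ℝ)
    (db : Fin K → ℕ) (ib : Fin K → S) (b : Fin K)
    (db' : Fin K → ℕ) (ib' : Fin K → S) : ℝ :=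
  ∑ a : Fin K,
    (η / K + (1 - η) * (if a = b then 1 else 0)) *
      ((PC a) ^ (db a)) (ib a) (ib' a) *
      (if db' a = 1 ∧ ∀ c : Fin K, c ≠ a → db' c = db c + 1 then 1 else 0) *
      (if ∀ c : Fin K, c ≠ a → ib' c = ib c then 1 else 0)

/-- Mandl-type identifiability: For any two distinct arms configurations
`C = (h, P₁, P₂)` and `C′ = (h′, P₁′, P₂′)` (row-stochastic, `P₁ ≠ P₂`, `P₁′ ≠ P₂′`,
differing in at least one component), there exists a state `(d̄, ī)` (positive delays)
such that for every arm `b`, the transition probability functions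
`(d̄′, ī′) ↦ Q_C(d̄′, ī′ | d̄, ī, b)` and `(d̄′, ī′) ↦ Q_{C′}(d̄′, ī′ | d̄, ī, b)` are
not identical on the state space. -/
theorem mandl_identifiability {S : Type*} [Fintype S] [DecidableEq S] [Nonempty S]
    (K : ℕ) (hK : 3 ≤ K) (η : ℝ) (hη : η ∈ Set.Ioc (0 : ℝ) 1)
    (h h' : Fin K) (P₁ P₂ P₁' P₂' : Matrix S S ℝ)
    (hP₁ : RowStochastic P₁) (hP₂ : RowStochastic P₂)
    (hP₁' : RowStochastic P₁') (hP₂' : RowStochastic P₂')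
    (hC : P₁ ≠ P₂) (hC' : P₁' ≠ P₂')
    (hdiff : ¬(h = h' ∧ P₁ = P₁' ∧ P₂ = P₂')) :
    ∃ (db : Fin K → ℕ) (ib : Fin K → S), (∀ a, 1 ≤ db a) ∧
      ∀ b : Fin K, ∃ (db' : Fin K → ℕ) (ib' : Fin K → S), (∀ a, 1 ≤ db' a) ∧
        Qtrans η (armMatrix h P₁ P₂) db ib b db' ib' ≠
          Qtrans η (armMatrix h' P₁' P₂') db ib b db' ib' := by
  have key : ∃ a, armMatrix h P₁ P₂ a ≠ armMatrix h' P₁' P₂' a := by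
    by_contra hcon
    push Not at hcon
    obtain ⟨c, hc1, hc2⟩ : ∃ c : Fin K, c ≠ h ∧ c ≠ h' := by
      have hcard : ({h, h'} : Finset (Fin K)).card < Fintype.card (Fin K) := by
        have := Finset.card_le_two (a := h) (b := h')
        rw [Fintype.card_fin]
        omega
      obtain ⟨c, hc⟩ := Finset.exists_mem_notMem_of_card_lt_card
        (s := {h, h'}) (t := Finset.univ) (by simpa using hcard)
      refine ⟨c, ?_, ?_⟩ <;> intro hh <;> simp [hh] at hc
    have h2 : P₂ = P₂' := by simpa [armMatrix, hc1, hc2] using hcon c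
    have h1 := hcon h
    by_cases e : h = h'
    · exact hdiff ⟨e, by simpa [armMatrix, e] using h1, h2⟩
    · exact hC (by simpa [armMatrix, e, h2] using h1)
  obtain ⟨a, ha⟩ := key
  obtain ⟨i, j, hij⟩ : ∃ i j, armMatrix h P₁ P₂ a i j ≠ armMatrix h' P₁' P₂' a i j := by
    by_contra hcon
    push Not at hcon
    exact ha (by ext i j; exact hcon i j)
  refine ⟨fun _ => 1, fun _ => i, fun _ => le_rfl, fun b => ?_⟩
  refine ⟨Function.update (fun _ => 2) a 1, Function.update (fun _ => i) a j, ?_, ?_⟩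
  · intro c
    by_cases e : c = a
    · subst e; simp
    · simp [e]
  have hQ : ∀ PC : Fin K → Matrix S S ℝ,
      Qtrans η PC (fun _ => 1) (fun _ => i) b
        (Function.update (fun _ => 2) a 1) (Function.update (fun _ => i) a j)
      = (η / K + (1 - η) * (if a = b then 1 else 0)) * PC a i j := by
    intro PC
    unfold Qtrans
    rw [Finset.sum_eq_single a]
    · have e1 : ∀ c : Fin K, c ≠ a →
          Function.update (fun _ : Fin K => 2) a 1 c = 1 + 1 := by
        intro c hc; simp [hc]
      have e2 : ∀ c : Fin K, c ≠ a → Function.update (fun _ : Fin K => i) a j c = i := by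
        intro c hc; simp [hc]
      rw [if_pos (c := _ ∧ _) ⟨by simp, e1⟩, if_pos e2]
      simp
    · intro c _ hc
      rw [if_neg (c := _ ∧ _) (by simp [hc])]
      simp
    · simp
  rw [hQ, hQ]
  have hpos : 0 < η / K + (1 - η) * (if a = b then (1 : ℝ) else 0) := by
    have hK0 : (0 : ℝ) < K := by
      have : 0 < K := by omega
      exact_mod_cast this
    have h1 := div_pos hη.1 hK0
    have h2 := hη.2
    split_ifs <;> linarith
  exact fun e => hij (mul_left_cancel₀ hpos.ne' e)
end

section
/- Fix a nonempty finite set S, an integer K ≥ 3, η ∈ (0,1], and ε* ∈ (0,1). Let C = (h, P₁, P₂) be an arms configuration such that for every integer d ≥ 1 and all i, j ∈ S: if P₁^d(j|i) > 0 then P₁^d(j|i) ≥ ε*, and if P₂^d(j|i) > 0 then P₂^d(j|i) ≥ ε*. Then for all states (d̄, ī), (d̄′, ī′) and every arm b ∈ {1,…,K}: either Q_C(d̄′, ī′ | d̄, ī, b) = 0 or Q_C(d̄′, ī′ | d̄, ī, b) ≥ (η/K)·ε*. -/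
open Matrix

theorem aux_pow_nonneg {S : Type*} [Fintype S] [DecidableEq S] {P : Matrix S S ℝ}
    (hP : ∀ i j, 0 ≤ P i j) (d : ℕ) : ∀ i j, 0 ≤ (P ^ d) i j := by
  induction d with
  | zero =>
    intro i j
    rw [pow_zero, Matrix.one_apply]
    split_ifs <;> norm_num
  | succ n ih =>
    intro i j
    rw [pow_succ, Matrix.mul_apply]
    exact Finset.sum_nonneg fun k _ => mul_nonneg (ih i k) (hP k j)

theorem aux_sum {ι : Type*} [Fintype ι] {c : ℝ} (hc : 0 ≤ c) (f : ι → ℝ)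
    (hf : ∀ a, f a = 0 ∨ c ≤ f a) : ∑ a, f a = 0 ∨ c ≤ ∑ a, f a := by
  by_cases hz : ∀ a, f a = 0
  · exact Or.inl (Finset.sum_eq_zero fun a _ => hz a)
  · right
    push Not at hz
    obtain ⟨a, ha⟩ := hz
    have hnn : ∀ x ∈ Finset.univ, 0 ≤ f x := fun x _ =>
      (hf x).elim (fun h => h.ge) (fun h => hc.trans h)
    exact ((hf a).resolve_left ha).trans
      (Finset.single_le_sum hnn (Finset.mem_univ a))

/-- If every nonzero entry of every power of `P₁` and of `P₂` is at least
`ε* ∈ (0,1)`, then every transition probability of the controlled Markov process is either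
`0` or at least `(η/K)·ε*`. -/
theorem transition_prob_zero_or_bounded_below {S : Type*} [Fintype S] [DecidableEq S]
    [Nonempty S]
    (K : ℕ) (hK : 3 ≤ K) (η : ℝ) (hη : η ∈ Set.Ioc (0 : ℝ) 1)
    (εstar : ℝ) (hεstar : εstar ∈ Set.Ioo (0 : ℝ) 1)
    (h : Fin K) (P₁ P₂ : Matrix S S ℝ)
    (hP₁ : RowStochastic P₁) (hP₂ : RowStochastic P₂) (hne : P₁ ≠ P₂)
    (hP₁bd : ∀ d : ℕ, 1 ≤ d → ∀ i j, 0 < (P₁ ^ d) i j → εstar ≤ (P₁ ^ d) i j)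
    (hP₂bd : ∀ d : ℕ, 1 ≤ d → ∀ i j, 0 < (P₂ ^ d) i j → εstar ≤ (P₂ ^ d) i j)
    (db db' : Fin K → ℕ) (ib ib' : Fin K → S)
    (hdb : ∀ a, 1 ≤ db a) (hdb' : ∀ a, 1 ≤ db' a)
    (b : Fin K) :
    Qtrans η (armMatrix h P₁ P₂) db ib b db' ib' = 0 ∨
      (η / K) * εstar ≤ Qtrans η (armMatrix h P₁ P₂) db ib b db' ib' := by
  classical
  obtain ⟨hη0, hη1⟩ := hη
  obtain ⟨hε0, hε1⟩ := hεstar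
  have hKpos : (0 : ℝ) < K := by
    have : 0 < K := by omega
    exact_mod_cast this
  have hηK : 0 < η / K := div_pos hη0 hKpos
  have hentry : ∀ a, ((armMatrix h P₁ P₂ a) ^ (db a)) (ib a) (ib' a) = 0 ∨
      εstar ≤ ((armMatrix h P₁ P₂ a) ^ (db a)) (ib a) (ib' a) := by
    intro a
    unfold armMatrix
    split_ifs
    · rcases (aux_pow_nonneg hP₁.1 (db a) (ib a) (ib' a)).eq_or_lt with h0 | h0
      · exact Or.inl h0.symm
      · exact Or.inr (hP₁bd _ (hdb a) _ _ h0)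
    · rcases (aux_pow_nonneg hP₂.1 (db a) (ib a) (ib' a)).eq_or_lt with h0 | h0
      · exact Or.inl h0.symm
      · exact Or.inr (hP₂bd _ (hdb a) _ _ h0)
  have hpos : 0 < η / K * εstar := mul_pos hηK hε0
  unfold Qtrans
  refine aux_sum hpos.le _ ?_
  intro a
  have hcoef : η / K ≤ η / K + (1 - η) * (if a = b then 1 else 0) := by
    split_ifs <;> linarith
  rcases hentry a with h0 | h0
  · left
    rw [h0]; simp
  · have hm := mul_le_mul hcoef h0 hε0.le (hηK.le.trans hcoef)
    generalize (η / K + (1 - η) * (if a = b then (1 : ℝ) else 0)) *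
      ((armMatrix h P₁ P₂ a) ^ (db a)) (ib a) (ib' a) = x at hm ⊢
    by_cases h1 : db' a = 1 ∧ ∀ c : Fin K, c ≠ a → db' c = db c + 1
    · by_cases h2 : ∀ c : Fin K, c ≠ a → ib' c = ib c
      · right
        rw [if_pos h1, if_pos h2]
        linarith
      · left
        rw [if_neg h2, mul_zero]
    · left
      rw [if_neg h1, mul_zero, zero_mul]
end
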